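/- arXiv:1206.1184 — 2 statements merged into one kernel-verified Lean document; each statement's English description precedes it below -/
import Mathlib

section
/- For every integer n ≥ 3, every ε > 0, all indices a,b ∈ {1,…,n}, and every y ∈ ℝⁿ₊, the standard bubble satisfies the exact identity U_ε(y) ∂_a∂_bU_ε(y) − (n/(n−2)) ∂_aU_ε(y) ∂_bU_ε(y) = −(1/(n−2)) |∇U_ε(y)|² δ_{ab}, where |∇U_ε|² = Σ_{c=1}^n (∂_cU_ε)² and δ_{ab} is the Kronecker delta. -/
/-!
The bubble is a power `U = K Q ^ p` of the squared distance `Q` to the pole `-ε eₙ`, with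
`p = (2 - n) / 2`. For any positive `Q`, the combination `U ∂ₐ∂_b U - ((p - 1) / p) ∂ₐU ∂_b U`
cancels the products `∂ₐQ ∂_b Q` and leaves a multiple of the Hessian of `Q`. For a squared distance
that Hessian is `2 δ_{ab}` and `|∇Q|² = 4 Q`, so the remaining multiple of `δ_{ab}` is
`|∇U|² / (2 p)`.
-/

open Filter Topology

section RpowOfFunction

variable {E : Type*} [NormedAddCommGroup E] [NormedSpace ℝ E] {Q : E → ℝ} {y : E}

lemma fderiv_const_mul_rpow_apply (hQ : DifferentiableAt ℝ Q y) (hy : Q y ≠ 0) (K p : ℝ) (v : E) :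
    fderiv ℝ (fun z => K * Q z ^ p) y v = K * p * Q y ^ (p - 1) * fderiv ℝ Q y v := by
  rw [((hQ.hasFDerivAt.rpow_const (Or.inl hy)).const_mul K).fderiv]
  simp only [smul_apply, smul_eq_mul]
  ring

lemma fderiv_fderiv_const_mul_rpow_apply {w : E} (hQ : ∀ᶠ z in 𝓝 y, DifferentiableAt ℝ Q z)
    (hQw : DifferentiableAt ℝ (fun z => fderiv ℝ Q z w) y) (hy : Q y ≠ 0) (K p : ℝ) (v : E) :
    fderiv ℝ (fun z => fderiv ℝ (fun u => K * Q u ^ p) z w) y v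
      = K * p * ((p - 1) * Q y ^ (p - 2) * fderiv ℝ Q y v * fderiv ℝ Q y w
        + Q y ^ (p - 1) * fderiv ℝ (fun z => fderiv ℝ Q z w) y v) := by
  have hQy : DifferentiableAt ℝ Q y := hQ.self_of_nhds
  have first_derivative : (fun z => fderiv ℝ (fun u => K * Q u ^ p) z w)
      =ᶠ[𝓝 y] fun z => K * p * Q z ^ (p - 1) * fderiv ℝ Q z w := by
    filter_upwards [hQ, hQy.continuousAt.eventually_ne hy] with z hz hz₀
    exact fderiv_const_mul_rpow_apply hz hz₀ K p w
  have hpow : DifferentiableAt ℝ (fun z => K * p * Q z ^ (p - 1)) y :=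
    (hQy.rpow_const (Or.inl hy)).const_mul (K * p)
  rw [first_derivative.fderiv_eq, fderiv_fun_mul hpow hQw]
  simp only [add_apply, smul_apply, smul_eq_mul,
    fderiv_const_mul_rpow_apply hQy hy]
  rw [show p - 1 - 1 = p - 2 by ring]
  ring

lemma const_mul_rpow_mul_fderiv_fderiv_sub {w : E} (hQ : ∀ᶠ z in 𝓝 y, DifferentiableAt ℝ Q z)
    (hQw : DifferentiableAt ℝ (fun z => fderiv ℝ Q z w) y) (hy : 0 < Q y) (K : ℝ) {p : ℝ}
    (hp : p ≠ 0) (v : E) :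
    K * Q y ^ p * fderiv ℝ (fun z => fderiv ℝ (fun u => K * Q u ^ p) z w) y v
        - (p - 1) / p * fderiv ℝ (fun z => K * Q z ^ p) y v * fderiv ℝ (fun z => K * Q z ^ p) y w
      = p * (K * Q y ^ (p - 1)) ^ 2 * Q y * fderiv ℝ (fun z => fderiv ℝ Q z w) y v := by
  have hpow : Q y ^ p = Q y ^ (p - 1) * Q y := by
    rw [← Real.rpow_add_one hy.ne', sub_add_cancel]
  have hpow_sub_one : Q y ^ (p - 1) = Q y ^ (p - 2) * Q y := by
    rw [← Real.rpow_add_one hy.ne']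
    ring_nf
  rw [fderiv_fderiv_const_mul_rpow_apply hQ hQw hy.ne',
    fderiv_const_mul_rpow_apply hQ.self_of_nhds hy.ne',
    fderiv_const_mul_rpow_apply hQ.self_of_nhds hy.ne', hpow, hpow_sub_one]
  field_simp
  ring

end RpowOfFunction

section SqDist

variable {ι : Type*} [Fintype ι]

/-- The squared Euclidean distance from `x` to `y`. It is written out in coordinates because
`ι → ℝ` carries the supremum norm. -/
def sqDist (x y : ι → ℝ) : ℝ := ∑ i, (y i - x i) ^ 2

lemma sqDist_nonneg (x y : ι → ℝ) : 0 ≤ sqDist x y :=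
  Finset.sum_nonneg fun _ _ => sq_nonneg _

lemma sqDist_pos {x y : ι → ℝ} (h : y ≠ x) : 0 < sqDist x y := by
  obtain ⟨i, hi⟩ := Function.ne_iff.mp h
  exact Finset.sum_pos' (fun _ _ => sq_nonneg _)
    ⟨i, Finset.mem_univ i, sq_pos_of_ne_zero (sub_ne_zero.mpr hi)⟩

lemma hasFDerivAt_sqDist (x y : ι → ℝ) :
    HasFDerivAt (sqDist x)
      (∑ i, (2 * (y i - x i)) • (ContinuousLinearMap.proj i : (ι → ℝ) →L[ℝ] ℝ)) y := by
  refine HasFDerivAt.fun_sum fun i _ => ?_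
  simpa using ((hasFDerivAt_apply i y).sub_const (x i)).pow 2

lemma differentiable_sqDist (x : ι → ℝ) : Differentiable ℝ (sqDist x) :=
  fun y => (hasFDerivAt_sqDist x y).differentiableAt

variable [DecidableEq ι]

lemma fderiv_sqDist_single (x y : ι → ℝ) (a : ι) :
    fderiv ℝ (sqDist x) y (Pi.single a 1) = 2 * (y a - x a) := by
  simp [(hasFDerivAt_sqDist x y).fderiv, Pi.single_apply]

lemma hasFDerivAt_fderiv_sqDist_single (x y : ι → ℝ) (b : ι) :
    HasFDerivAt (fun z => fderiv ℝ (sqDist x) z (Pi.single b 1))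
      ((2 : ℝ) • (ContinuousLinearMap.proj b : (ι → ℝ) →L[ℝ] ℝ)) y := by
  simp only [fderiv_sqDist_single]
  exact ((hasFDerivAt_apply b y).sub_const (x b)).const_mul 2

lemma fderiv_fderiv_sqDist_single (x y : ι → ℝ) (a b : ι) :
    fderiv ℝ (fun z => fderiv ℝ (sqDist x) z (Pi.single b 1)) y (Pi.single a 1)
      = 2 * if a = b then 1 else 0 := by
  simp [(hasFDerivAt_fderiv_sqDist_single x y b).fderiv, Pi.single_apply, eq_comm]

lemma sum_sq_fderiv_sqDist_single (x y : ι → ℝ) :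
    ∑ c, fderiv ℝ (sqDist x) y (Pi.single c 1) ^ 2 = 4 * sqDist x y := by
  simp only [fderiv_sqDist_single, sqDist, mul_pow, Finset.mul_sum]
  norm_num

lemma sum_sq_fderiv_const_mul_sqDist_rpow_single {x y : ι → ℝ} (hy : y ≠ x) (K p : ℝ) :
    ∑ c, fderiv ℝ (fun z => K * sqDist x z ^ p) y (Pi.single c 1) ^ 2
      = (K * p * sqDist x y ^ (p - 1)) ^ 2 * (4 * sqDist x y) := by
  simp only [fderiv_const_mul_rpow_apply (differentiable_sqDist x y) (sqDist_pos hy).ne',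
    mul_pow _ (fderiv ℝ (sqDist x) y _), ← Finset.mul_sum, sum_sq_fderiv_sqDist_single]

lemma const_mul_sqDist_rpow_mul_fderiv_fderiv_sub {x y : ι → ℝ} (hy : y ≠ x) (K : ℝ) {p : ℝ}
    (hp : p ≠ 0) (a b : ι) :
    K * sqDist x y ^ p * fderiv ℝ (fun z => fderiv ℝ (fun u => K * sqDist x u ^ p) z
          (Pi.single b 1)) y (Pi.single a 1)
        - (p - 1) / p * fderiv ℝ (fun z => K * sqDist x z ^ p) y (Pi.single a 1)
          * fderiv ℝ (fun z => K * sqDist x z ^ p) y (Pi.single b 1)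
      = 1 / (2 * p) * (∑ c, fderiv ℝ (fun z => K * sqDist x z ^ p) y (Pi.single c 1) ^ 2)
          * if a = b then 1 else 0 := by
  rw [const_mul_rpow_mul_fderiv_fderiv_sub (.of_forall (differentiable_sqDist x))
      (hasFDerivAt_fderiv_sqDist_single x y b).differentiableAt (sqDist_pos hy) K hp,
    fderiv_fderiv_sqDist_single, sum_sq_fderiv_const_mul_sqDist_rpow_single hy]
  field_simp
  ring

theorem stmt_1_general {d : ℝ} (hd : d ≠ 2) {ε : ℝ} (hε : 0 ≤ ε) {x : ι → ℝ} {U : (ι → ℝ) → ℝ}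
    (hU : ∀ y, U y = (ε / sqDist x y) ^ ((d - 2) / 2)) {y : ι → ℝ} (hy : y ≠ x) (a b : ι) :
    U y * fderiv ℝ (fun z => fderiv ℝ U z (Pi.single b 1)) y (Pi.single a 1)
        - d / (d - 2) * fderiv ℝ U y (Pi.single a 1) * fderiv ℝ U y (Pi.single b 1)
      = -(1 / (d - 2)) * (∑ c, (fderiv ℝ U y (Pi.single c 1)) ^ 2)
          * (if a = b then 1 else 0) := by
  have hd' : d - 2 ≠ 0 := sub_ne_zero.mpr hd
  have hU_eq : U = fun z => ε ^ ((d - 2) / 2) * sqDist x z ^ (-((d - 2) / 2)) := by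
    funext z
    rw [hU, Real.div_rpow hε (sqDist_nonneg x z), Real.rpow_neg (sqDist_nonneg x z),
      div_eq_mul_inv]
  have hcoeff_product : d / (d - 2) = (-((d - 2) / 2) - 1) / -((d - 2) / 2) := by
    field_simp
    ring
  have hcoeff_gradient : -(1 / (d - 2)) = 1 / (2 * -((d - 2) / 2)) := by
    field_simp
  rw [hU_eq, hcoeff_product, hcoeff_gradient]
  exact const_mul_sqDist_rpow_mul_fderiv_fderiv_sub hy _ (neg_ne_zero.mpr (by positivity)) a b

end SqDist

lemma add_sq_add_sum_sq_eq_sqDist_single {n : ℕ} (hn : n - 1 < n) (ε : ℝ) (y : Fin n → ℝ) :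
    (ε + y ⟨n - 1, hn⟩) ^ 2 + ∑ i : Fin n, (if (i : ℕ) < n - 1 then y i ^ 2 else 0)
      = sqDist (Pi.single ⟨n - 1, hn⟩ (-ε)) y := by
  obtain _ | k := n
  · omega
  · change (ε + y (Fin.last k)) ^ 2 + ∑ i : Fin (k + 1), (if (i : ℕ) < k then y i ^ 2 else 0)
      = sqDist (Pi.single (Fin.last k) (-ε)) y
    simp [sqDist, Fin.sum_univ_castSucc, add_comm]

lemma ne_single_neg_of_nonneg {ι : Type*} [DecidableEq ι] {ε : ℝ} (hε : 0 < ε) {l : ι}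
    {y : ι → ℝ} (hy : 0 ≤ y l) : y ≠ Pi.single l (-ε) := by
  rintro rfl
  rw [Pi.single_eq_same] at hy
  linarith

/-- the exact second-order identity
`U ∂_a∂_b U − (n/(n−2)) ∂_aU ∂_bU = −(1/(n−2)) |∇U|² δ_{ab}`
for the standard bubble `U_ε` on the half-space `ℝⁿ₊`. -/
theorem stmt_1 (n : ℕ) (hn : 3 ≤ n) (ε : ℝ) (hε : 0 < ε)
    (U : (Fin n → ℝ) → ℝ)
    (hU : ∀ y : Fin n → ℝ, U y =
      (ε / ((ε + y ⟨n - 1, by omega⟩) ^ 2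
        + ∑ i : Fin n, if (i : ℕ) < n - 1 then y i ^ 2 else 0)) ^ (((n : ℝ) - 2) / 2)) :
    ∀ (a b : Fin n) (y : Fin n → ℝ), 0 ≤ y ⟨n - 1, by omega⟩ →
      U y * fderiv ℝ (fun z => fderiv ℝ U z (Pi.single b 1)) y (Pi.single a 1)
        - (n : ℝ) / ((n : ℝ) - 2)
            * fderiv ℝ U y (Pi.single a 1) * fderiv ℝ U y (Pi.single b 1)
        = -(1 / ((n : ℝ) - 2)) * (∑ c : Fin n, (fderiv ℝ U y (Pi.single c 1)) ^ 2)
            * (if a = b then 1 else 0) := by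
  intro a b y hy
  exact stmt_1_general (d := n) (by exact_mod_cast (by omega : n ≠ 2)) hε.le
    (fun z => by rw [hU, add_sq_add_sum_sq_eq_sqDist_single]) (ne_single_neg_of_nonneg hε hy) a b
end

section
/- Let n ≥ 3, ε > 0, ρ > 0, and let T be a smooth map from ℝⁿ₊ to symmetric n×n real matrices with Σ_{a=1}^n T_{aa} ≡ 0, such that for each a = 1,…,n one has Σ_{b=1}^n ( U_ε ∂_bT_{ab} + (2n/(n−2)) ∂_bU_ε · T_{ab} ) = 0 at every point of B⁺_ρ(0). Then ((n−2)/(4(n−1))) U_ε Σ_{a,b=1}^n ∂_a∂_bT_{ab} + Σ_{a,b=1}^n ∂_a( ∂_bU_ε · T_{ab} ) = 0 at every point of B⁺_ρ(0). -/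
/-!
Write `D_a = ∑_b ∂_b T_ab`, `P = ∑_a ∂_a U D_a`, `S = ∑_a ∂_a D_a` and
`R = ∑_{a,b} ∂_a (∂_b U T_ab)`, and put `c = 2n/(n-2)`.
The bubble is the power `-(n-2)/2` of a quadratic polynomial whose Hessian is a multiple of the
identity, so `U ∂_a ∂_b U - (c/2) ∂_a U ∂_b U` is a multiple of `δ_ab`, which a trace-free `T` does
not see: `U ⟨∇²U, T⟩ = (c/2) T(∇U, ∇U)`. Contracting the equation with `∇U` gives
`U P + c T(∇U, ∇U) = 0`, whence `⟨∇²U, T⟩ = -P/2` and, by symmetry of `T`, `R = ⟨∇²U, T⟩ + P = P/2`.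
The divergence of the equation is `P + U S + c R = 0`, that is `U S + (c + 2) R = 0`, and
`c + 2 = 4(n-1)/(n-2)`. Up to the boundary, derivatives of identities valid only on the half-space
are determined because the half-space is a set of unique differentiability.
-/

open Filter Topology

theorem fderiv_eq_of_eventuallyEq_nhdsWithin {𝕜 E F : Type*} [NontriviallyNormedField 𝕜]
    [NormedAddCommGroup E] [NormedSpace 𝕜 E] [NormedAddCommGroup F] [NormedSpace 𝕜 F]
    {f g : E → F} {s : Set E} {x : E} (hs : UniqueDiffWithinAt 𝕜 s x) (hx : x ∈ s)
    (hf : DifferentiableAt 𝕜 f x) (hg : DifferentiableAt 𝕜 g x) (hfg : f =ᶠ[𝓝[s] x] g) :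
    fderiv 𝕜 f x = fderiv 𝕜 g x := by
  rw [← hf.fderivWithin hs, ← hg.fderivWithin hs, hfg.fderivWithin_eq_of_mem hx]

theorem uniqueDiffOn_setOf_le_apply {ι : Type*} [Finite ι] (i : ι) (t : ℝ) :
    UniqueDiffOn ℝ {y : ι → ℝ | t ≤ y i} := by
  have halfSpace_eq_pi : {y : ι → ℝ | t ≤ y i} = Set.pi {i} fun _ ↦ Set.Ici t := by
    ext y
    simp
  have := Fintype.ofFinite ι
  rw [halfSpace_eq_pi]
  exact UniqueDiffOn.pi fun _ _ ↦ uniqueDiffOn_Ici t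

section DirDeriv

variable {E : Type*} [NormedAddCommGroup E] [NormedSpace ℝ E]

/-- The derivative of `f` at `x` in the direction `v`, read off the Fréchet derivative so that it is
linear in `v`; its junk value is `0` at points where `f` is not Fréchet differentiable. Partial
derivatives are the case `v = Pi.single a 1`. -/
noncomputable def dirDeriv (v : E) (f : E → ℝ) (x : E) : ℝ :=
  fderiv ℝ f x v

variable {f g : E → ℝ} {s : Set E} {x : E}

theorem dirDeriv_eq_of_eventuallyEq_nhdsWithin (v : E) (hs : UniqueDiffWithinAt ℝ s x)
    (hx : x ∈ s) (hf : DifferentiableAt ℝ f x) (hg : DifferentiableAt ℝ g x)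
    (hfg : f =ᶠ[𝓝[s] x] g) : dirDeriv v f x = dirDeriv v g x :=
  congrArg (· v) (fderiv_eq_of_eventuallyEq_nhdsWithin hs hx hf hg hfg)

theorem dirDeriv_eq_zero_of_eventually_nhdsWithin (v : E) (hs : UniqueDiffWithinAt ℝ s x)
    (hx : x ∈ s) (hf : DifferentiableAt ℝ f x) (hf₀ : ∀ᶠ y in 𝓝[s] x, f y = 0) :
    dirDeriv v f x = 0 := by
  rw [dirDeriv_eq_of_eventuallyEq_nhdsWithin v hs hx hf (differentiableAt_const 0) hf₀]
  simp [dirDeriv]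

theorem dirDeriv_mul (v : E) (hf : DifferentiableAt ℝ f x) (hg : DifferentiableAt ℝ g x) :
    dirDeriv v (fun y ↦ f y * g y) x = dirDeriv v f x * g x + f x * dirDeriv v g x := by
  simp only [dirDeriv, fderiv_fun_mul hf hg, add_apply, smul_apply, smul_eq_mul]
  ring

theorem dirDeriv_add (v : E) (hf : DifferentiableAt ℝ f x) (hg : DifferentiableAt ℝ g x) :
    dirDeriv v (fun y ↦ f y + g y) x = dirDeriv v f x + dirDeriv v g x := by
  simp [dirDeriv, fderiv_fun_add hf hg]

theorem dirDeriv_sum {κ : Type*} (v : E) {F : κ → E → ℝ} {u : Finset κ}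
    (hF : ∀ k ∈ u, DifferentiableAt ℝ (F k) x) :
    dirDeriv v (fun y ↦ ∑ k ∈ u, F k y) x = ∑ k ∈ u, dirDeriv v (F k) x := by
  simp [dirDeriv, fderiv_fun_sum hF]

theorem dirDeriv_const_mul (v : E) (c : ℝ) (f : E → ℝ) :
    dirDeriv v (fun y ↦ c * f y) = fun y ↦ c * dirDeriv v f y := by
  ext x
  exact congrArg (· v) (congrFun (fderiv_const_smul_field (𝕜 := ℝ) (f := f) c) x)

theorem dirDeriv_rpow_const (v : E) (p : ℝ) (hf : DifferentiableAt ℝ f x) (hx : f x ≠ 0) :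
    dirDeriv v (fun y ↦ f y ^ p) x = p * f x ^ (p - 1) * dirDeriv v f x := by
  simp [dirDeriv, (hf.hasFDerivAt.rpow_const (p := p) (Or.inl hx)).fderiv]

theorem differentiableAt_dirDeriv (v : E) (hf : ContDiffAt ℝ 2 f x) :
    DifferentiableAt ℝ (dirDeriv v f) x :=
  ((hf.fderiv_right (m := 1) (by norm_num)).differentiableAt one_ne_zero).clm_apply
    (differentiableAt_const _)

theorem rpow_mul_dirDeriv_dirDeriv_rpow (v w : E) {p : ℝ} (hp : p ≠ 0)
    (hf : ContDiffAt ℝ 2 f x) (hx : f x ≠ 0) :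
    f x ^ p * dirDeriv v (dirDeriv w fun y ↦ f y ^ p) x =
      (p - 1) / p * (dirDeriv v (fun y ↦ f y ^ p) x * dirDeriv w (fun y ↦ f y ^ p) x) +
        p * (f x ^ p) ^ 2 / f x * dirDeriv v (dirDeriv w f) x := by
  have hfx := hf.differentiableAt two_ne_zero
  have hrpow : DifferentiableAt ℝ (fun y ↦ f y ^ (p - 1)) x := hfx.rpow_const (Or.inl hx)
  have dirDeriv_rpow_near :
      (dirDeriv w fun y ↦ f y ^ p) =ᶠ[𝓝 x] fun y ↦ p * f y ^ (p - 1) * dirDeriv w f y := by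
    filter_upwards [hf.eventually (by simp), hfx.continuousAt.eventually_ne hx] with y hy hy0
    exact dirDeriv_rpow_const w p (hy.differentiableAt two_ne_zero) hy0
  have hessian_rpow : dirDeriv v (dirDeriv w fun y ↦ f y ^ p) x =
      p * ((p - 1) * f x ^ (p - 1 - 1) * dirDeriv v f x) * dirDeriv w f x +
        p * f x ^ (p - 1) * dirDeriv v (dirDeriv w f) x := by
    rw [dirDeriv, dirDeriv_rpow_near.fderiv_eq, ← dirDeriv,
      dirDeriv_mul v (hrpow.const_mul p) (differentiableAt_dirDeriv w hf),
      congrFun (dirDeriv_const_mul v p _) x, dirDeriv_rpow_const v _ hfx hx]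
  rw [hessian_rpow, dirDeriv_rpow_const v p hfx hx, dirDeriv_rpow_const w p hfx hx,
    Real.rpow_sub_one hx, Real.rpow_sub_one hx]
  field_simp

end DirDeriv

variable {ι : Type*} [Fintype ι]

section Bubble

/-- The bubble `(ε / |y - p|²)^((m-2)/2)` with pole `p`; the standard bubble `U_ε` on `ℝⁿ₊` is
the case `m = n`, `p = (0, …, 0, -ε)`. The Euclidean norm is spelled out because `ι → ℝ` carries the
sup norm, and `m` need not be the dimension. -/
noncomputable def bubble (ε m : ℝ) (p y : ι → ℝ) : ℝ :=
  (ε / ∑ i, (y i - p i) ^ 2) ^ ((m - 2) / 2)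

variable {ε m : ℝ} {p x : ι → ℝ}

theorem bubble_eq_rpow (ε m : ℝ) (p : ι → ℝ) :
    bubble ε m p = fun y ↦ (ε⁻¹ * ∑ i, (y i - p i) ^ 2) ^ ((2 - m) / 2) := by
  ext y
  rw [bubble, show (2 - m) / 2 = -((m - 2) / 2) by ring, Real.rpow_neg_eq_inv_rpow, mul_inv,
    inv_inv, div_eq_mul_inv]

theorem sum_sub_sq_pos (hx : x ≠ p) : 0 < ∑ i, (x i - p i) ^ 2 := by
  obtain ⟨i, hi⟩ := Function.ne_iff.mp hx
  exact Finset.sum_pos' (fun _ _ ↦ sq_nonneg _)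
    ⟨i, Finset.mem_univ i, sq_pos_of_ne_zero (sub_ne_zero.mpr hi)⟩

theorem bubble_pos (hε : 0 < ε) (hx : x ≠ p) : 0 < bubble ε m p x :=
  Real.rpow_pos_of_pos (div_pos hε (sum_sub_sq_pos hx)) _

theorem contDiffAt_bubble {k : WithTop ℕ∞} (hε : ε ≠ 0) (hx : x ≠ p) :
    ContDiffAt ℝ k (bubble ε m p) x := by
  rw [bubble_eq_rpow]
  refine ContDiffAt.rpow_const_of_ne (by fun_prop) ?_
  exact mul_ne_zero (inv_ne_zero hε) (sum_sub_sq_pos hx).ne'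

theorem sq_add_sum_ite_lt_eq_sum_sub_sq {n : ℕ} (N : Fin n) (hN : (N : ℕ) = n - 1) (ε : ℝ)
    (y : Fin n → ℝ) :
    (ε + y N) ^ 2 + (∑ i : Fin n, if (i : ℕ) < n - 1 then y i ^ 2 else 0) =
      ∑ i, (y i - Pi.single (M := fun _ ↦ ℝ) N (-ε) i) ^ 2 := by
  have summand_eq i : (y i - Pi.single (M := fun _ ↦ ℝ) N (-ε) i) ^ 2 =
      (if i = N then (ε + y N) ^ 2 else 0) + if (i : ℕ) < n - 1 then y i ^ 2 else 0 := by
    obtain rfl | hi := eq_or_ne i N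
    · simp [hN, add_comm]
    · have hlt : (i : ℕ) < n - 1 := by
        have := Fin.val_ne_of_ne hi
        omega
      simp [hi, hlt]
  simp [summand_eq, Finset.sum_add_distrib]

end Bubble

variable [DecidableEq ι]

local notation:max "∂[" a "]" => dirDeriv (Pi.single (M := fun _ ↦ ℝ) a 1)

section BubbleHessian

variable {ε m : ℝ} {p x : ι → ℝ}

theorem partialDeriv_sum_sub_sq (p : ι → ℝ) (a : ι) :
    ∂[a] (fun y ↦ ∑ i, (y i - p i) ^ 2) = fun y ↦ 2 * (y a - p a) := by
  ext y
  have hasFDerivAt := HasFDerivAt.fun_sum (u := Finset.univ) fun i _ ↦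
    ((ContinuousLinearMap.proj (R := ℝ) (φ := fun _ : ι ↦ ℝ) i).hasFDerivAt (x := y).sub_const
      (p i)).pow 2
  rw [dirDeriv]
  refine (congrArg (· (Pi.single a 1)) hasFDerivAt.fderiv).trans ?_
  simp [Pi.single_apply]

theorem partialDeriv_partialDeriv_sum_sub_sq (p x : ι → ℝ) (a b : ι) :
    ∂[a] (∂[b] fun y ↦ ∑ i, (y i - p i) ^ 2) x = if a = b then 2 else 0 := by
  have hasFDerivAt := ((ContinuousLinearMap.proj (R := ℝ) (φ := fun _ : ι ↦ ℝ) b).hasFDerivAt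
    (x := x).sub_const (p b)).const_mul 2
  rw [partialDeriv_sum_sub_sq, dirDeriv]
  refine (congrArg (· (Pi.single a 1)) hasFDerivAt.fderiv).trans ?_
  simp [Pi.single_apply, eq_comm]

theorem bubble_mul_partialDeriv_partialDeriv_bubble (hε : ε ≠ 0) (hm : m ≠ 2) (hx : x ≠ p)
    (a b : ι) :
    bubble ε m p x * ∂[a] (∂[b] (bubble ε m p)) x =
      m / (m - 2) * (∂[a] (bubble ε m p) x * ∂[b] (bubble ε m p) x) +
        if a = b then (2 - m) * bubble ε m p x ^ 2 / ∑ i, (x i - p i) ^ 2 else 0 := by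
  set q : (ι → ℝ) → ℝ := fun y ↦ ∑ i, (y i - p i) ^ 2 with hq
  have hqx : q x ≠ 0 := (sum_sub_sq_pos hx).ne'
  have hexp : (2 - m) / 2 ≠ 0 := div_ne_zero (sub_ne_zero.mpr hm.symm) two_ne_zero
  have hq2 : ContDiffAt ℝ 2 (fun y ↦ ε⁻¹ * q y) x := by fun_prop
  have hess : ∂[a] (∂[b] fun y ↦ ε⁻¹ * q y) x = if a = b then 2 * ε⁻¹ else 0 := by
    simp [dirDeriv_const_mul, hq, partialDeriv_partialDeriv_sum_sub_sq, mul_comm]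
  have hcoeff : ((2 - m) / 2 - 1) / ((2 - m) / 2) = m / (m - 2) := by
    field_simp [sub_ne_zero.mpr hm, sub_ne_zero.mpr hm.symm]
    ring
  rw [bubble_eq_rpow, rpow_mul_dirDeriv_dirDeriv_rpow _ _ hexp hq2 (by positivity), hess,
    hcoeff, mul_ite, mul_zero]
  congr 2
  simp only [hq]
  field_simp

end BubbleHessian

section WeightedDivergence

variable {U : (ι → ℝ) → ℝ} {T : ι → ι → (ι → ℝ) → ℝ} {s : Set (ι → ℝ)} {x : ι → ℝ}

theorem sum_partialDeriv_weightedDivergence_eq_zero {c : ℝ} (hs : UniqueDiffWithinAt ℝ s x)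
    (hx : x ∈ s) (hU : ContDiffAt ℝ 2 U x) (hT : ∀ a b, ContDiffAt ℝ 2 (T a b) x)
    (hdiv : ∀ a, ∀ᶠ y in 𝓝[s] x, ∑ b, (U y * ∂[b] (T a b) y + c * ∂[b] U y * T a b y) = 0) :
    ∑ a, ∑ b, ∂[a] U x * ∂[b] (T a b) x + U x * ∑ a, ∑ b, ∂[a] (∂[b] (T a b)) x +
      c * ∑ a, ∑ b, ∂[a] (fun y ↦ ∂[b] U y * T a b y) x = 0 := by
  have hUx := hU.differentiableAt two_ne_zero
  have hTx a b := (hT a b).differentiableAt two_ne_zero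
  have hUDT a b : DifferentiableAt ℝ (fun y ↦ U y * ∂[b] (T a b) y) x :=
    hUx.fun_mul (differentiableAt_dirDeriv _ (hT a b))
  have hDUT a b : DifferentiableAt ℝ (fun y ↦ ∂[b] U y * T a b y) x :=
    (differentiableAt_dirDeriv _ hU).fun_mul (hTx a b)
  have partialDeriv_eq_zero a : ∑ b, (∂[a] U x * ∂[b] (T a b) x + U x * ∂[a] (∂[b] (T a b)) x +
      c * ∂[a] (fun y ↦ ∂[b] U y * T a b y) x) = 0 := by
    have hzero := dirDeriv_eq_zero_of_eventually_nhdsWithin (Pi.single a 1) hs hx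
      (DifferentiableAt.fun_sum fun b _ ↦ (hUDT a b).fun_add ((hDUT a b).const_mul c))
      (by simpa only [mul_assoc] using hdiv a)
    rw [dirDeriv_sum _ fun b _ ↦ (hUDT a b).fun_add ((hDUT a b).const_mul c)] at hzero
    simpa [dirDeriv_add _ (hUDT a _) ((hDUT a _).const_mul c), dirDeriv_const_mul,
      dirDeriv_mul _ hUx (differentiableAt_dirDeriv _ (hT a _))] using hzero
  simpa only [Finset.sum_add_distrib, Finset.sum_const_zero, ← Finset.mul_sum] using
    Finset.sum_congr rfl fun a (_ : a ∈ Finset.univ) ↦ partialDeriv_eq_zero a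

theorem sum_partialDeriv_gradient_mul_of_symm (hU : ∀ b, DifferentiableAt ℝ (∂[b] U) x)
    (hT : ∀ a b, DifferentiableAt ℝ (T a b) x)
    (hsymm : ∀ a b c, ∂[c] (T a b) x = ∂[c] (T b a) x) :
    ∑ a, ∑ b, ∂[a] (fun y ↦ ∂[b] U y * T a b y) x =
      ∑ a, ∑ b, ∂[a] (∂[b] U) x * T a b x + ∑ a, ∑ b, ∂[a] U x * ∂[b] (T a b) x := by
  simp only [dirDeriv_mul _ (hU _) (hT _ _), Finset.sum_add_distrib]
  congr 1
  rw [Finset.sum_comm]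
  exact Finset.sum_congr rfl fun b _ ↦ Finset.sum_congr rfl fun a _ ↦ by rw [hsymm]

theorem sum_mul_eq_of_eq_add_ite_of_trace_eq_zero {R : Type*} [CommSemiring R]
    {H G τ : ι → ι → R} {l : R} (hH : ∀ a b, H a b = G a b + if a = b then l else 0)
    (htrace : ∑ a, τ a a = 0) :
    ∑ a, ∑ b, H a b * τ a b = ∑ a, ∑ b, G a b * τ a b := by
  simp [hH, add_mul, Finset.sum_add_distrib, ← Finset.mul_sum, htrace]

theorem stmt_2_general {m l : ℝ} (hm₁ : m ≠ 1) (hm₂ : m ≠ 2) (hs : UniqueDiffWithinAt ℝ s x)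
    (hx : x ∈ s) (hU : ContDiffAt ℝ 2 U x) (hUx : U x ≠ 0)
    (hHess : ∀ a b, U x * ∂[a] (∂[b] U) x =
      m / (m - 2) * (∂[a] U x * ∂[b] U x) + if a = b then l else 0)
    (hT : ∀ a b, ContDiffAt ℝ 2 (T a b) x) (hsymm : ∀ a b, T a b =ᶠ[𝓝[s] x] T b a)
    (htrace : ∑ a, T a a x = 0)
    (hdiv : ∀ a, ∀ᶠ y in 𝓝[s] x,
      ∑ b, (U y * ∂[b] (T a b) y + 2 * m / (m - 2) * ∂[b] U y * T a b y) = 0) :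
    (m - 2) / (4 * (m - 1)) * U x * ∑ a, ∑ b, ∂[a] (∂[b] (T a b)) x +
      ∑ a, ∑ b, ∂[a] (fun y ↦ ∂[b] U y * T a b y) x = 0 := by
  have hTx a b := (hT a b).differentiableAt two_ne_zero
  have divergence_eq := sum_partialDeriv_weightedDivergence_eq_zero hs hx hU hT hdiv
  have leibniz := sum_partialDeriv_gradient_mul_of_symm
    (fun _ ↦ differentiableAt_dirDeriv _ hU) hTx
    fun a b _ ↦ dirDeriv_eq_of_eventuallyEq_nhdsWithin _ hs hx (hTx a b) (hTx b a) (hsymm a b)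
  have hessian_contraction := sum_mul_eq_of_eq_add_ite_of_trace_eq_zero
    (τ := fun a b ↦ T a b x) hHess htrace
  have gradient_contraction : U x * ∑ a, ∑ b, ∂[a] U x * ∂[b] (T a b) x +
      2 * ∑ a, ∑ b, m / (m - 2) * (∂[a] U x * ∂[b] U x) * T a b x = 0 := by
    simp only [Finset.mul_sum, ← Finset.sum_add_distrib]
    refine Finset.sum_eq_zero fun a _ ↦ ?_
    rw [← mul_zero (∂[a] U x), ← (hdiv a).self_of_nhdsWithin hx, Finset.mul_sum]
    exact Finset.sum_congr rfl fun b _ ↦ by ring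
  simp only [mul_assoc (U x), ← Finset.mul_sum] at hessian_contraction
  generalize ∑ a, ∑ b, ∂[a] U x * ∂[b] (T a b) x = P at *
  generalize ∑ a, ∑ b, ∂[a] (∂[b] U) x * T a b x = H at *
  have hHP : 2 * H + P = 0 := by
    refine (mul_eq_zero.mp ?_).resolve_left hUx
    linear_combination gradient_contraction + 2 * hessian_contraction
  have h₁ : m - 1 ≠ 0 := sub_ne_zero.mpr hm₁
  have h₂ : m - 2 ≠ 0 := sub_ne_zero.mpr hm₂
  rw [leibniz] at divergence_eq ⊢
  field_simp at divergence_eq ⊢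
  linear_combination divergence_eq + (m - 2) * hHP

end WeightedDivergence

/-- if `T` is a smooth symmetric trace-free 2-tensor on `ℝⁿ₊` satisfying
`Σ_b (U ∂_bT_{ab} + (2n/(n−2)) ∂_bU T_{ab}) = 0` on the half-ball `B⁺_ρ(0)`, then
`((n−2)/(4(n−1))) U Σ_{a,b} ∂_a∂_bT_{ab} + Σ_{a,b} ∂_a(∂_bU T_{ab}) = 0` on `B⁺_ρ(0)`. -/
theorem stmt_2 (n : ℕ) (hn : 3 ≤ n) (ε ρ : ℝ) (hε : 0 < ε) (hρ : 0 < ρ)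
    (U : (Fin n → ℝ) → ℝ)
    (hU : ∀ y : Fin n → ℝ, U y =
      (ε / ((ε + y ⟨n - 1, by omega⟩) ^ 2
        + ∑ i : Fin n, if (i : ℕ) < n - 1 then y i ^ 2 else 0)) ^ (((n : ℝ) - 2) / 2))
    (T : Fin n → Fin n → (Fin n → ℝ) → ℝ)
    (hTsmooth : ∀ a b, ContDiff ℝ (⊤ : ℕ∞) (T a b))
    (hTsymm : ∀ a b, ∀ x : Fin n → ℝ, 0 ≤ x ⟨n - 1, by omega⟩ → T a b x = T b a x)
    (hTtrace : ∀ x : Fin n → ℝ, 0 ≤ x ⟨n - 1, by omega⟩ → (∑ a : Fin n, T a a x) = 0)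
    (hPDE : ∀ a : Fin n, ∀ x : Fin n → ℝ, 0 ≤ x ⟨n - 1, by omega⟩ →
      Real.sqrt (∑ c : Fin n, x c ^ 2) < ρ →
      (∑ b : Fin n, (U x * fderiv ℝ (T a b) x (Pi.single b 1)
        + 2 * (n : ℝ) / ((n : ℝ) - 2) * fderiv ℝ U x (Pi.single b 1) * T a b x)) = 0) :
    ∀ x : Fin n → ℝ, 0 ≤ x ⟨n - 1, by omega⟩ → Real.sqrt (∑ c : Fin n, x c ^ 2) < ρ →
      ((n : ℝ) - 2) / (4 * ((n : ℝ) - 1)) * U x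
          * (∑ a : Fin n, ∑ b : Fin n,
              fderiv ℝ (fun z => fderiv ℝ (T a b) z (Pi.single b 1)) x (Pi.single a 1))
        + (∑ a : Fin n, ∑ b : Fin n,
            fderiv ℝ (fun z => fderiv ℝ U z (Pi.single b 1) * T a b z) x (Pi.single a 1))
        = 0 := by
  intro x hx hxρ
  set N : Fin n := ⟨n - 1, by omega⟩
  have hn' : (3 : ℝ) ≤ n := by exact_mod_cast hn
  obtain rfl : U = bubble ε n (Pi.single N (-ε)) := funext fun y ↦ by
    rw [hU, sq_add_sum_ite_lt_eq_sum_sub_sq N rfl, bubble]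
  have x_ne_pole : x ≠ Pi.single N (-ε) := fun h ↦ by
    have : x N = -ε := by rw [h, Pi.single_eq_same]
    linarith
  have isOpen_ball : IsOpen {y : Fin n → ℝ | √(∑ c, y c ^ 2) < ρ} :=
    isOpen_lt (by fun_prop) continuous_const
  refine stmt_2_general (s := {y | 0 ≤ y N}) (by linarith) (by linarith)
    (uniqueDiffOn_setOf_le_apply N 0 x hx) hx (contDiffAt_bubble hε.ne' x_ne_pole)
    (bubble_pos hε x_ne_pole).ne'
    (bubble_mul_partialDeriv_partialDeriv_bubble hε.ne' (by linarith) x_ne_pole)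
    (fun a b ↦ (contDiff_infty.mp (hTsmooth a b) 2).contDiffAt)
    (fun a b ↦ eventually_mem_nhdsWithin.mono (hTsymm a b)) (hTtrace x hx) fun a ↦ ?_
  filter_upwards [self_mem_nhdsWithin, mem_nhdsWithin_of_mem_nhds (isOpen_ball.mem_nhds hxρ)]
    with y hy hyρ using hPDE a y hy hyρ
end
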